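/- Let N ≥ 1 and Λ > 1. Let (u, v) be a classical solution of the system (P_Λ) with u ≥ 0 and v ≥ 0 on ℝ^N, satisfying condition (h∞). Then u and v depend only on the last coordinate x_N (i.e. u(x) = u(y) and v(x) = v(y) whenever x_N = y_N), and moreover ∂_N u > 0 and ∂_N v < 0 at every point of ℝ^N. -/

import Mathlib

/-!
The proof is a quantitative sliding method. Write `w = u (· + ξ) - u` and `z = v - v (· + ξ)`; the
claim is that `w, z ≥ 0` whenever `ξ_N > 0` (`slides_of_pos`). Letting `ξ_N → 0` then gives
independence of `x'`. No compactness of translates and no elliptic regularity theory enter: every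
step compares `u`, `v`, `w` or `z` with an explicit barrier at a maximum or minimum point.

* A Keller–Osserman barrier bounds `u` and `v`, hence their Laplacians, and a reflection barrier on
  half balls makes `u` and `v` Lipschitz (`keller_osserman`, `exists_lipschitz`).
* Since `Λ > 1`, the pure states `(1, 0)` and `(0, 1)` are strictly stable and the system for
  `(w, z)` is cooperative. So if `w` or `z` can be negative only where `(u, v)` or its translate is
  near a pure state, they are nonnegative: minimize `min w z + e ‖x‖²` and let `e` be small
  (`slides_of_stable`). This covers all large translations along `ξ`.
* If `w, z ≥ 0` then `Δ w ≤ C w`, and an exponential barrier propagates lower bounds for `w` over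
  bounded distances (`propagate`). Increments of `u` along `x + j ξ` sum to about `1` over a bounded
  number of steps, so one of them is not small, and `w` is bounded below by a positive constant on
  slabs `|x_N| ≤ M` (`Slides.slab_gap`); so is `z`, by the symmetry `(u, v) ↦ (v (-·), u (-·))`. The
  Lipschitz bounds then allow the translation to be shortened slightly, and a continuity argument
  on the length of the translation concludes.
* `propagate` is linear in the lower bound, so applied to the difference quotients of `u` in the
  direction `e_N` it gives `∂_N u > 0` (`partial_pos`); the symmetry gives `∂_N v < 0`.
-/

open scoped RealInnerProductSpace
open Filter

noncomputable section

/-- The Laplacian of `f : ℝ^N → ℝ`, as the sum of the pure second partial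
derivatives in the coordinate directions. -/
def lap (N : ℕ) (f : EuclideanSpace ℝ (Fin N) → ℝ) (x : EuclideanSpace ℝ (Fin N)) : ℝ :=
  ∑ i : Fin N,
    fderiv ℝ (fun y => fderiv ℝ f y (EuclideanSpace.single i 1)) x (EuclideanSpace.single i 1)

/-- `(u, v)` is a classical solution of the system `(P_Λ)` on `ℝ^N`:
`u, v` are `C²` and `-Δu = u - u³ - Λ u v²`, `-Δv = v - v³ - Λ u² v` pointwise. -/
def IsSolution (N : ℕ) (Λ : ℝ) (u v : EuclideanSpace ℝ (Fin N) → ℝ) : Prop :=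
  ContDiff ℝ 2 u ∧ ContDiff ℝ 2 v ∧
  (∀ x, -lap N u x = u x - (u x) ^ 3 - Λ * u x * (v x) ^ 2) ∧
  (∀ x, -lap N v x = v x - (v x) ^ 3 - Λ * (u x) ^ 2 * v x)

/-- Condition `(h∞)`: `u → 1`, `v → 0` as `x_N → +∞` and `u → 0`, `v → 1` as
`x_N → -∞`, uniformly with respect to `x' ∈ ℝ^{N-1}` (the dimension is `N + 1`). -/
def Hinf (N : ℕ) (u v : EuclideanSpace ℝ (Fin (N + 1)) → ℝ) : Prop :=
  (∀ ε : ℝ, 0 < ε → ∃ M : ℝ, ∀ x : EuclideanSpace ℝ (Fin (N + 1)),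
    M ≤ x (Fin.last N) → |u x - 1| < ε ∧ |v x| < ε) ∧
  (∀ ε : ℝ, 0 < ε → ∃ M : ℝ, ∀ x : EuclideanSpace ℝ (Fin (N + 1)),
    x (Fin.last N) ≤ M → |u x| < ε ∧ |v x - 1| < ε)

/-! ### One-dimensional calculus and the touching principle -/

/-- Necessary second-order condition at a local minimum on the line. -/
lemma second_deriv_nonneg {g g' : ℝ → ℝ} {g2 : ℝ}
    (h1 : ∀ᶠ t in nhds (0 : ℝ), HasDerivAt g (g' t) t)
    (h2 : HasDerivAt g' g2 0) (hmin : IsLocalMin g 0) : 0 ≤ g2 := by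
  by_contra hneg
  push Not at hneg
  have hd : deriv g =ᶠ[nhds 0] g' := h1.mono fun t ht => ht.deriv
  have h0 : deriv g 0 = 0 := hmin.deriv_eq_zero
  have h2' : deriv (deriv g) 0 = g2 := by
    rw [hd.deriv_eq]; exact h2.deriv
  have hcont : ContinuousAt g 0 := h1.self_of_nhds.continuousAt
  have hmax : IsLocalMax g 0 :=
    isLocalMax_of_deriv_deriv_neg (by rw [h2']; exact hneg) h0 hcont
  -- being both a local minimum and a local maximum, `0` has a neighbourhood where `g` is constant
  have hconst : g =ᶠ[nhds 0] fun _ => g 0 := by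
    filter_upwards [hmin, hmax] with t h h'
    exact le_antisymm h' h
  have : deriv g =ᶠ[nhds 0] deriv (fun _ => g 0) := hconst.deriv
  have h3 : deriv (deriv g) 0 = 0 := by
    rw [this.deriv_eq]; simp
  rw [h2'] at h3
  linarith

/-- The second derivative of `u` at `x` in the direction `e`. -/
def secondDir {n : ℕ} (u : EuclideanSpace ℝ (Fin n) → ℝ) (x e : EuclideanSpace ℝ (Fin n)) : ℝ :=
  fderiv ℝ (fun y => fderiv ℝ u y e) x e

lemma lap_eq_sum {n : ℕ} (u : EuclideanSpace ℝ (Fin n) → ℝ) (x : EuclideanSpace ℝ (Fin n)) :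
    lap n u x = ∑ i, secondDir u x (EuclideanSpace.single i 1) := rfl

lemma hasDerivAt_line {n : ℕ} {u : EuclideanSpace ℝ (Fin n) → ℝ} (hu : ContDiff ℝ 2 u)
    (x e : EuclideanSpace ℝ (Fin n)) (t : ℝ) :
    HasDerivAt (fun t : ℝ => u (x + t • e)) (fderiv ℝ u (x + t • e) e) t := by
  have h1 : HasDerivAt (fun t : ℝ => x + t • e) e t := by
    simpa using ((hasDerivAt_id t).smul_const e).const_add x
  exact ((hu.differentiable (by norm_num)) _).hasFDerivAt.comp_hasDerivAt t h1

lemma hasDerivAt_line2 {n : ℕ} {u : EuclideanSpace ℝ (Fin n) → ℝ} (hu : ContDiff ℝ 2 u)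
    (x e : EuclideanSpace ℝ (Fin n)) :
    HasDerivAt (fun t : ℝ => fderiv ℝ u (x + t • e) e) (secondDir u x e) 0 := by
  have h1 : HasDerivAt (fun t : ℝ => x + t • e) e 0 := by
    simpa using ((hasDerivAt_id (0 : ℝ)).smul_const e).const_add x
  have hd : Differentiable ℝ (fun y => fderiv ℝ u y e) := by
    have : ContDiff ℝ 1 (fderiv ℝ u) := hu.fderiv_right (by norm_num)
    exact (this.differentiable (by norm_num)).clm_apply (differentiable_const e)
  have h2 : HasFDerivAt (fun y => fderiv ℝ u y e)
      (fderiv ℝ (fun y => fderiv ℝ u y e) x) (x + (0 : ℝ) • e) := by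
    simpa using (hd x).hasFDerivAt
  exact h2.comp_hasDerivAt 0 h1

lemma secondDir_smul {n : ℕ} {u : EuclideanSpace ℝ (Fin n) → ℝ} (hu : ContDiff ℝ 2 u)
    (x e : EuclideanSpace ℝ (Fin n)) (c : ℝ) :
    secondDir u x (c • e) = c ^ 2 * secondDir u x e := by
  have hd : Differentiable ℝ (fun y => fderiv ℝ u y e) := by
    have : ContDiff ℝ 1 (fderiv ℝ u) := hu.fderiv_right (by norm_num)
    exact (this.differentiable (by norm_num)).clm_apply (differentiable_const e)
  unfold secondDir
  have : (fun y => fderiv ℝ u y (c • e)) = fun y => c * fderiv ℝ u y e := by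
    ext y; simp
  rw [this, fderiv_const_mul (hd x)]
  simp only [map_smul, FunLike.coe_smul, Pi.smul_apply, smul_eq_mul]
  ring

lemma normSq_line {n : ℕ} (x : EuclideanSpace ℝ (Fin n)) (i : Fin n) (t : ℝ) :
    ‖x + t • EuclideanSpace.single i (1 : ℝ)‖ ^ 2 = ‖x‖ ^ 2 + 2 * x i * t + t ^ 2 := by
  rw [norm_add_sq_real, inner_smul_right, norm_smul]
  simp [EuclideanSpace.inner_single_right]
  ring

/-- Touching principle: if the radial function `F (‖· - y‖²)` touches `u` from below at `p`, then
`Δ u p` is at least the Laplacian of the radial function there. -/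
lemma lap_ge_of_touch {n : ℕ} {u : EuclideanSpace ℝ (Fin n) → ℝ} (hu : ContDiff ℝ 2 u)
    (y p : EuclideanSpace ℝ (Fin n)) {F F' : ℝ → ℝ} {F2 : ℝ}
    (hF : ∀ᶠ s in nhds (‖p - y‖ ^ 2), HasDerivAt F (F' s) s)
    (hF' : HasDerivAt F' F2 (‖p - y‖ ^ 2))
    (hmin : IsLocalMin (fun x => u x - F (‖x - y‖ ^ 2)) p) :
    4 * ‖p - y‖ ^ 2 * F2 + 2 * n * F' (‖p - y‖ ^ 2) ≤ lap n u p := by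
  have key : ∀ i : Fin n, 4 * (p - y) i ^ 2 * F2 + 2 * F' (‖p - y‖ ^ 2) ≤
      secondDir u p (EuclideanSpace.single i 1) := by
    intro i
    set e : EuclideanSpace ℝ (Fin n) := EuclideanSpace.single i 1 with he
    set a := (p - y) i
    set s0 := ‖p - y‖ ^ 2 with hs0
    -- `‖p + t e - y‖² = q t`
    let q : ℝ → ℝ := fun t => s0 + 2 * a * t + t ^ 2
    have hq : ∀ t, HasDerivAt q (2 * a + 2 * t) t := by
      intro t
      have := (((hasDerivAt_id t).const_mul (2 * a)).const_add s0).add ((hasDerivAt_id t).pow 2)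
      refine this.congr_deriv ?_
      simp
    have hq0 : q 0 = s0 := by simp [q]
    have hqc : Tendsto q (nhds 0) (nhds s0) := by
      have := (hq 0).continuousAt.tendsto
      rwa [hq0] at this
    have hd1 : ∀ᶠ t in nhds (0 : ℝ), HasDerivAt (fun t => u (p + t • e) - F (q t))
        (fderiv ℝ u (p + t • e) e - F' (q t) * (2 * a + 2 * t)) t := by
      filter_upwards [hqc.eventually hF] with t ht
      exact (hasDerivAt_line hu p e t).sub (ht.comp t (hq t))
    have hd2 : HasDerivAt (fun t => fderiv ℝ u (p + t • e) e - F' (q t) * (2 * a + 2 * t))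
        (secondDir u p e - (F2 * (2 * a) * (2 * a) + F' s0 * 2)) 0 := by
      have hlin : HasDerivAt (fun t : ℝ => 2 * a + 2 * t) 2 0 := by
        simpa using ((hasDerivAt_id (0 : ℝ)).const_mul 2).const_add (2 * a)
      have hF2 : HasDerivAt (fun t => F' (q t)) (F2 * (2 * a + 2 * 0)) 0 := by
        have h : HasDerivAt F' F2 (q 0) := by rw [hq0]; exact hF'
        exact h.comp 0 (hq 0)
      have := (hasDerivAt_line2 hu p e).sub (hF2.mul hlin)
      refine this.congr_deriv ?_
      rw [hq0]; simp
    have hm : IsLocalMin (fun t => u (p + t • e) - F (q t)) 0 := by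
      have hc : Tendsto (fun t : ℝ => p + t • e) (nhds 0) (nhds p) := by
        have : Continuous (fun t : ℝ => p + t • e) := by fun_prop
        simpa using this.tendsto 0
      have := hc.eventually hmin
      filter_upwards [this] with t ht
      have e1 : p + t • e - y = (p - y) + t • e := by abel
      simp only [e1] at ht
      have e2 : ‖p - y + t • e‖ ^ 2 = q t := normSq_line _ _ _
      simpa only [e2, hq0, zero_smul, add_zero] using ht
    have := second_deriv_nonneg hd1 hd2 hm
    linarith
  have hsum := Finset.sum_le_sum fun i (_ : i ∈ Finset.univ) => key i
  rw [← lap_eq_sum, Finset.sum_add_distrib, ← Finset.sum_mul, ← Finset.mul_sum] at hsum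
  have hn : ∑ i, (p - y) i ^ 2 = ‖p - y‖ ^ 2 := by
    rw [EuclideanSpace.real_norm_sq_eq]
  rw [hn] at hsum
  simp only [Finset.sum_const, Finset.card_univ, Fintype.card_fin, nsmul_eq_mul] at hsum
  linarith

lemma lap_neg {n : ℕ} (u : EuclideanSpace ℝ (Fin n) → ℝ) (x : EuclideanSpace ℝ (Fin n)) :
    lap n (fun z => -u z) x = -lap n u x := by
  unfold lap
  rw [← Finset.sum_neg_distrib]
  refine Finset.sum_congr rfl fun i _ => ?_
  have : (fun y => fderiv ℝ (fun z => -u z) y (EuclideanSpace.single i 1)) =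
      fun y => -fderiv ℝ u y (EuclideanSpace.single i 1) := by
    ext y; rw [fderiv_fun_neg]; rfl
  rw [this, fderiv_fun_neg]; rfl

lemma lap_sub {n : ℕ} {u w : EuclideanSpace ℝ (Fin n) → ℝ} (hu : ContDiff ℝ 2 u)
    (hw : ContDiff ℝ 2 w) (x : EuclideanSpace ℝ (Fin n)) :
    lap n (fun z => u z - w z) x = lap n u x - lap n w x := by
  have hd : ∀ {f : EuclideanSpace ℝ (Fin n) → ℝ} (_ : ContDiff ℝ 2 f) (e),
      Differentiable ℝ (fun y => fderiv ℝ f y e) := by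
    intro f hf e
    have : ContDiff ℝ 1 (fderiv ℝ f) := hf.fderiv_right (by norm_num)
    exact (this.differentiable (by norm_num)).clm_apply (differentiable_const e)
  unfold lap
  rw [← Finset.sum_sub_distrib]
  refine Finset.sum_congr rfl fun i _ => ?_
  have : (fun y => fderiv ℝ (fun z => u z - w z) y (EuclideanSpace.single i 1)) =
      fun y => fderiv ℝ u y (EuclideanSpace.single i 1) -
        fderiv ℝ w y (EuclideanSpace.single i 1) := by
    ext y
    rw [fderiv_fun_sub (hu.differentiable (by norm_num) y) (hw.differentiable (by norm_num) y)]
    rfl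
  rw [this, fderiv_fun_sub (hd hu _ x) (hd hw _ x)]; rfl

lemma lap_translate {n : ℕ} (u : EuclideanSpace ℝ (Fin n) → ℝ) (a x : EuclideanSpace ℝ (Fin n)) :
    lap n (fun z => u (z + a)) x = lap n u (x + a) := by
  unfold lap
  refine Finset.sum_congr rfl fun i _ => ?_
  have : (fun y => fderiv ℝ (fun z => u (z + a)) y (EuclideanSpace.single i 1)) =
      fun y => (fun y => fderiv ℝ u y (EuclideanSpace.single i 1)) (y + a) := by
    ext y; rw [fderiv_comp_add_right]
  rw [this]
  exact congrArg (fun l : EuclideanSpace ℝ (Fin n) →L[ℝ] ℝ => l (EuclideanSpace.single i 1))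
    (fderiv_comp_add_right (𝕜 := ℝ) (x := x) (f := fun y => fderiv ℝ u y (EuclideanSpace.single i 1)) a)

lemma fderiv_comp_neg_apply {n : ℕ} (f : EuclideanSpace ℝ (Fin n) → ℝ)
    (x e : EuclideanSpace ℝ (Fin n)) :
    fderiv ℝ (fun z => f (-z)) x e = -fderiv ℝ f (-x) e := by
  have := (ContinuousLinearEquiv.neg ℝ (M := EuclideanSpace ℝ (Fin n))).comp_right_fderiv
    (f := f) (x := x)
  change fderiv ℝ (f ∘ (ContinuousLinearEquiv.neg ℝ (M := EuclideanSpace ℝ (Fin n)))) x e = _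
  rw [this]
  simp

lemma lap_comp_neg {n : ℕ} (u : EuclideanSpace ℝ (Fin n) → ℝ) (x : EuclideanSpace ℝ (Fin n)) :
    lap n (fun z => u (-z)) x = lap n u (-x) := by
  unfold lap
  refine Finset.sum_congr rfl fun i _ => ?_
  simp only [fderiv_comp_neg_apply]
  rw [fderiv_fun_neg]
  have := fderiv_comp_neg_apply (fun y => fderiv ℝ u y (EuclideanSpace.single i 1)) x
    (EuclideanSpace.single i 1)
  change -(fderiv ℝ (fun z => (fun y => fderiv ℝ u y (EuclideanSpace.single i 1)) (-z)) x) _ = _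
  rw [this, neg_neg]

/-! ### A priori bounds -/

/-- Keller–Osserman bound: entire subsolutions of `Δ u = u³ - u` are bounded above by a constant
depending on the dimension only. The barrier on the unit ball around `x₀` is `P / (1 - ‖x - x₀‖²)`
with `P` the maximum of `(1 - ‖x - x₀‖²) u x`. -/
lemma keller_osserman {n : ℕ} {u : EuclideanSpace ℝ (Fin n) → ℝ} (hu : ContDiff ℝ 2 u)
    (hlap : ∀ x, u x ^ 3 - u x ≤ lap n u x) (x0 : EuclideanSpace ℝ (Fin n)) :
    u x0 ≤ 2 * n + 10 := by
  by_contra hcon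
  push Not at hcon
  have hn : (0 : ℝ) ≤ n := Nat.cast_nonneg n
  have hcu : Continuous u := hu.continuous
  obtain ⟨p, hp, hmax⟩ := (isCompact_closedBall x0 1).exists_isMaxOn
    ⟨x0, Metric.mem_closedBall_self zero_le_one⟩
    (f := fun x => (1 - ‖x - x0‖ ^ 2) * u x) (by fun_prop)
  set P := (1 - ‖p - x0‖ ^ 2) * u p with hP
  have hP0 : u x0 ≤ P := by
    have := hmax (Metric.mem_closedBall_self (x := x0) zero_le_one)
    simpa using this
  set s := ‖p - x0‖ ^ 2 with hs
  have hs0 : 0 ≤ s := by positivity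
  have hple : ‖p - x0‖ ≤ 1 := by simpa [dist_eq_norm] using hp
  have hs1 : s < 1 := by
    rcases lt_or_eq_of_le hple with h | h
    · rw [hs]; nlinarith [norm_nonneg (p - x0)]
    · exfalso
      have : s = 1 := by rw [hs, h]; norm_num
      rw [this] at hP
      simp at hP
      linarith
  have hplt : ‖p - x0‖ < 1 := by
    by_contra h
    push Not at h
    nlinarith
  have hd : ∀ r : ℝ, r < 1 →
      HasDerivAt (fun s => -(P * (1 - s)⁻¹)) (-(P * ((1 - r) ^ 2)⁻¹)) r := by
    intro r hr
    have h0 : (1 - r) ≠ 0 := by linarith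
    have h1 : HasDerivAt (fun s : ℝ => 1 - s) (-1) r := by
      simpa using (hasDerivAt_id r).const_sub 1
    refine ((h1.inv h0).const_mul P).neg.congr_deriv ?_
    field_simp
  have hd2 : HasDerivAt (fun s => -(P * ((1 - s) ^ 2)⁻¹)) (-(2 * P * ((1 - s) ^ 3)⁻¹)) s := by
    have h0 : (1 - s) ≠ 0 := by linarith
    have h1 : HasDerivAt (fun s : ℝ => 1 - s) (-1) s := by
      simpa using (hasDerivAt_id s).const_sub 1
    refine (((h1.pow 2).inv (pow_ne_zero 2 h0)).const_mul P).neg.congr_deriv ?_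
    simp
    field_simp
  have htouch := lap_ge_of_touch (u := fun z => -u z) hu.neg x0 p
    (F := fun s => -(P * (1 - s)⁻¹)) (F' := fun s => -(P * ((1 - s) ^ 2)⁻¹))
    (F2 := -(2 * P * ((1 - s) ^ 3)⁻¹))
    ((eventually_lt_nhds hs1).mono fun r hr => hd r hr) hd2 (by
      have hball : Metric.ball x0 1 ∈ nhds p :=
        Metric.isOpen_ball.mem_nhds (by simpa [dist_eq_norm] using hplt)
      filter_upwards [hball] with x hx
      have hx1 : ‖x - x0‖ < 1 := by simpa [dist_eq_norm] using hx
      have hx2 : 0 < 1 - ‖x - x0‖ ^ 2 := by nlinarith [norm_nonneg (x - x0)]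
      have h1 : (1 - ‖x - x0‖ ^ 2) * u x ≤ P := hmax (Metric.ball_subset_closedBall hx)
      have h2 : u x ≤ P * (1 - ‖x - x0‖ ^ 2)⁻¹ := by
        rw [← div_eq_mul_inv, le_div_iff₀ hx2]; linarith
      have h3 : u p = P * (1 - s)⁻¹ := by
        have : 1 - s ≠ 0 := by linarith
        rw [hP]; field_simp
      change -u p - -(P * (1 - s)⁻¹) ≤ -u x - -(P * (1 - ‖x - x0‖ ^ 2)⁻¹)
      linarith)
  rw [lap_neg, ← hs] at htouch
  have hup : u p = P / (1 - s) := by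
    have : 1 - s ≠ 0 := by linarith
    rw [hP]; field_simp
  have hl := hlap p
  rw [hup] at hl
  set d := 1 - s with hd'
  have hdpos : 0 < d := by linarith
  have hPpos : 0 < P := by linarith
  have h1 : (P / d) ^ 3 - P / d ≤ 4 * s * (2 * P * (d ^ 3)⁻¹) + 2 * n * (P * (d ^ 2)⁻¹) := by
    linarith
  have h2 : P * (P ^ 2 - d ^ 2) ≤ P * (8 * s + 2 * n * d) := by
    have := mul_le_mul_of_nonneg_right h1 (pow_pos hdpos 3).le
    have e1 : ((P / d) ^ 3 - P / d) * d ^ 3 = P * (P ^ 2 - d ^ 2) := by field_simp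
    have e2 : (4 * s * (2 * P * (d ^ 3)⁻¹) + 2 * n * (P * (d ^ 2)⁻¹)) * d ^ 3 =
        P * (8 * s + 2 * n * d) := by field_simp; ring
    rwa [e1, e2] at this
  have h3 := le_of_mul_le_mul_left h2 hPpos
  have hnd : n * d ≤ n * 1 := by gcongr; linarith
  nlinarith

/-- One-sided estimate of a symmetric difference, by comparing `u (m + z) - u (m + R z)`, with `R`
the reflection `z_i ↦ -z_i`, to a quadratic barrier on the half ball `‖z‖ ≤ 1, 0 ≤ z_i`. -/
lemma symm_diff_le {n : ℕ} {u : EuclideanSpace ℝ (Fin n) → ℝ} (hu : ContDiff ℝ 2 u)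
    {K C : ℝ} (hK : ∀ x, |u x| ≤ K) (hC : ∀ x, |lap n u x| ≤ C)
    (m : EuclideanSpace ℝ (Fin n)) (i : Fin n) {t : ℝ} (ht0 : 0 ≤ t) (ht1 : t ≤ 1) :
    u (m + t • EuclideanSpace.single i (1 : ℝ)) - u (m - t • EuclideanSpace.single i (1 : ℝ)) ≤
      (2 * K + (2 * K * n + C + 1)) * t := by
  have hK0 : 0 ≤ K := (abs_nonneg _).trans (hK m)
  have hC0 : 0 ≤ C := (abs_nonneg _).trans (hC m)
  have hn : (0 : ℝ) ≤ n := Nat.cast_nonneg n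
  set c := 2 * K * n + C + 1 with hc
  have hc0 : 0 < c := by positivity
  set e : EuclideanSpace ℝ (Fin n) := EuclideanSpace.single i 1 with he
  let R : EuclideanSpace ℝ (Fin n) → EuclideanSpace ℝ (Fin n) := fun z => z - (2 * z i) • e
  let G : EuclideanSpace ℝ (Fin n) → ℝ := fun z =>
    u (m + z) - u (m + R z) - (2 * K * ‖z‖ ^ 2 + c * z i - c * z i ^ 2)
  have hcu : Continuous u := hu.continuous
  have hGc : Continuous G := by
    simp only [G, R]; fun_prop
  let S : Set (EuclideanSpace ℝ (Fin n)) := Metric.closedBall 0 1 ∩ {z | 0 ≤ z i}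
  have hScl : IsClosed {z : EuclideanSpace ℝ (Fin n) | 0 ≤ z i} :=
    isClosed_le continuous_const (by fun_prop)
  have hS : IsCompact S := (isCompact_closedBall _ _).inter_right hScl
  have hei : e i = 1 := by simp [he]
  have hen : ‖e‖ = 1 := by simp [he]
  have hte : t • e ∈ S := by
    constructor
    · simp [norm_smul, hen, abs_of_nonneg ht0, ht1]
    · simp [hei, ht0]
  obtain ⟨p, hp, hmax⟩ := hS.exists_isMaxOn ⟨_, hte⟩ hGc.continuousOn
  have hRte : R (t • e) = -(t • e) := by
    simp only [R]
    have : (t • e) i = t := by simp [hei]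
    rw [this]; module
  suffices hGp : G p ≤ 0 by
    have h1 : G (t • e) ≤ 0 := (hmax hte).trans hGp
    simp only [G, hRte] at h1
    have h2 : (t • e) i = t := by simp [hei]
    have h3 : ‖t • e‖ = t := by simp [norm_smul, hen, abs_of_nonneg ht0]
    rw [h2, h3] at h1
    have h4 : m + -(t • e) = m - t • e := by abel
    rw [h4] at h1
    nlinarith [mul_nonneg hK0 ht0]
  by_contra hpos
  push Not at hpos
  have hpn : ‖p‖ ≤ 1 := by simpa using hp.1
  have hpi : 0 ≤ p i := hp.2
  have hpi1 : p i ≤ 1 := by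
    have := PiLp.norm_apply_le p i
    rw [Real.norm_eq_abs] at this
    linarith [le_abs_self (p i)]
  have hpi' : 0 < p i := by
    rcases lt_or_eq_of_le hpi with h | h
    · exact h
    · exfalso
      have hR : R p = p := by simp [R, ← h]
      simp only [G, hR, ← h] at hpos
      nlinarith [mul_nonneg hK0 (sq_nonneg ‖p‖)]
  have hpn' : ‖p‖ < 1 := by
    rcases lt_or_eq_of_le hpn with h | h
    · exact h
    · exfalso
      simp only [G, h] at hpos
      have h1 := abs_le.1 (hK (m + p))
      have h2 := abs_le.1 (hK (m + R p))
      nlinarith [mul_nonneg hc0.le (mul_nonneg hpi (sub_nonneg.2 hpi1))]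
  have hSn : S ∈ nhds p := by
    refine inter_mem (Metric.closedBall_mem_nhds_of_mem (by simpa using hpn')) ?_
    have : IsOpen {z : EuclideanSpace ℝ (Fin n) | 0 < z i} :=
      isOpen_lt continuous_const (by fun_prop)
    exact mem_of_superset (this.mem_nhds hpi') fun z (hz : 0 < z i) => hz.le
  have hloc : IsLocalMax G p := hmax.isLocalMax hSn
  -- second-order condition at `p` in the direction of the `j`-th basis vector
  have key : ∀ j : Fin n, secondDir u (m + p) (EuclideanSpace.single j 1) -
      secondDir u (m + R p) (EuclideanSpace.single j 1) ≤ 4 * K - (if i = j then 2 * c else 0) := by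
    intro j
    set f : EuclideanSpace ℝ (Fin n) := EuclideanSpace.single j 1 with hf
    let σ : ℝ := if i = j then -1 else 1
    let δ : ℝ := if i = j then 1 else 0
    have hfi : f i = δ := by
      simp [hf, δ]
    have hσ : σ ^ 2 = 1 := by
      simp only [σ]; split_ifs <;> norm_num
    have hRl : ∀ τ : ℝ, R (p + τ • f) = R p + τ • (σ • f) := by
      intro τ
      have h1 : (p + τ • f) i = p i + τ * δ := by simp [hfi]
      simp only [R, h1]
      by_cases hij : i = j
      · subst hij
        have hfe : f = e := rfl
        simp only [δ, σ, if_true, hfe]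
        module
      · simp only [δ, σ, if_neg hij]
        module
    have hd1 : ∀ τ : ℝ, HasDerivAt (fun τ : ℝ => -G (p + τ • f))
        (-(fderiv ℝ u (m + p + τ • f) f - fderiv ℝ u (m + R p + τ • (σ • f)) (σ • f) -
          (2 * K * (2 * p j + 2 * τ) + c * δ - c * (2 * (p i + τ * δ) * δ)))) τ := by
      intro τ
      have hq : HasDerivAt (fun τ : ℝ => 2 * K * (‖p‖ ^ 2 + 2 * p j * τ + τ ^ 2) +
          c * (p i + τ * δ) - c * (p i + τ * δ) ^ 2)
          (2 * K * (2 * p j + 2 * τ) + c * δ - c * (2 * (p i + τ * δ) * δ)) τ := by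
        have hid := hasDerivAt_id τ
        have hl : HasDerivAt (fun τ : ℝ => p i + τ * δ) δ τ := by
          simpa using (hid.mul_const δ).const_add (p i)
        have := (((((hid.const_mul (2 * p j)).const_add (‖p‖ ^ 2)).add (hid.pow 2)).const_mul
          (2 * K)).add (hl.const_mul c)).sub ((hl.pow 2).const_mul c)
        refine this.congr_deriv ?_
        simp
      have := (((hasDerivAt_line hu (m + p) f τ).sub
        (hasDerivAt_line hu (m + R p) (σ • f) τ)).sub hq).neg
      refine this.congr_of_eventuallyEq (Eventually.of_forall fun τ => ?_)
      have h1 : (p + τ • f) i = p i + τ * δ := by simp [hfi]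
      have h2 : ‖p + τ • f‖ ^ 2 = ‖p‖ ^ 2 + 2 * p j * τ + τ ^ 2 := normSq_line _ _ _
      simp only [G, hRl, h1, h2, Pi.neg_apply, Pi.sub_apply, add_assoc]
    have hd2 : HasDerivAt (fun τ : ℝ =>
        (-(fderiv ℝ u (m + p + τ • f) f - fderiv ℝ u (m + R p + τ • (σ • f)) (σ • f) -
          (2 * K * (2 * p j + 2 * τ) + c * δ - c * (2 * (p i + τ * δ) * δ)))))
        (-(secondDir u (m + p) f - secondDir u (m + R p) (σ • f) - (4 * K - 2 * c * δ ^ 2))) 0 := by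
      have hq : HasDerivAt (fun τ : ℝ =>
          2 * K * (2 * p j + 2 * τ) + c * δ - c * (2 * (p i + τ * δ) * δ))
          (4 * K - 2 * c * δ ^ 2) 0 := by
        have hid := hasDerivAt_id (0 : ℝ)
        have := ((((hid.const_mul 2).const_add (2 * p j)).const_mul (2 * K)).add_const (c * δ)).sub
          (((((hid.mul_const δ).const_add (p i)).const_mul 2).mul_const δ).const_mul c)
        refine this.congr_deriv ?_
        ring
      exact (((hasDerivAt_line2 hu (m + p) f).sub (hasDerivAt_line2 hu (m + R p) (σ • f))).sub
        hq).neg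
    have hm : IsLocalMin (fun τ : ℝ => -G (p + τ • f)) 0 := by
      have hcl : Tendsto (fun τ : ℝ => p + τ • f) (nhds 0) (nhds p) := by
        have : Continuous (fun τ : ℝ => p + τ • f) := by fun_prop
        simpa using this.tendsto 0
      filter_upwards [hcl.eventually hloc] with τ hτ
      simpa using hτ
    have h := second_deriv_nonneg (Eventually.of_forall hd1) hd2 hm
    rw [secondDir_smul hu, hσ] at h
    have hδ : 2 * c * δ ^ 2 = if i = j then 2 * c else 0 := by
      simp only [δ]; split_ifs <;> norm_num
    rw [hδ] at h
    linarith
  have hsum := Finset.sum_le_sum fun j (_ : j ∈ Finset.univ) => key j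
  rw [Finset.sum_sub_distrib, Finset.sum_sub_distrib, ← lap_eq_sum, ← lap_eq_sum] at hsum
  simp only [Finset.sum_const, Finset.card_univ, Fintype.card_fin, nsmul_eq_mul,
    Finset.sum_ite_eq, Finset.mem_univ, if_true] at hsum
  have h1 := abs_le.1 (hC (m + p))
  have h2 := abs_le.1 (hC (m + R p))
  nlinarith

lemma partial_le {n : ℕ} {u : EuclideanSpace ℝ (Fin n) → ℝ} (hu : ContDiff ℝ 2 u)
    {K C : ℝ} (hK : ∀ x, |u x| ≤ K) (hC : ∀ x, |lap n u x| ≤ C)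
    (m : EuclideanSpace ℝ (Fin n)) (i : Fin n) :
    2 * fderiv ℝ u m (EuclideanSpace.single i 1) ≤ 2 * K + (2 * K * n + C + 1) := by
  set e : EuclideanSpace ℝ (Fin n) := EuclideanSpace.single i 1 with he
  have h1 := hasDerivAt_line hu m e 0
  have h2 := hasDerivAt_line hu m (-e) 0
  have h3 := (h1.sub h2).tendsto_slope_zero_right
  simp only [zero_smul, add_zero, map_neg, sub_neg_eq_add, Pi.sub_apply, sub_self,
    sub_zero, zero_add, smul_eq_mul] at h3
  rw [two_mul]
  refine le_of_tendsto h3 ?_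
  filter_upwards [Ioc_mem_nhdsGT (zero_lt_one' ℝ)] with t ht
  have h4 := symm_diff_le hu hK hC m i ht.1.le ht.2
  have h5 : m + t • -e = m - t • e := by module
  rw [h5, inv_mul_le_iff₀ ht.1]
  linarith

/-- A bounded function with bounded Laplacian on `ℝⁿ` is Lipschitz. -/
lemma exists_lipschitz {n : ℕ} {u : EuclideanSpace ℝ (Fin n) → ℝ} (hu : ContDiff ℝ 2 u)
    {K C : ℝ} (hK : ∀ x, |u x| ≤ K) (hC : ∀ x, |lap n u x| ≤ C) :
    ∃ L : ℝ, 0 < L ∧ ∀ x y, |u x - u y| ≤ L * ‖x - y‖ := by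
  set A := 2 * K + (2 * K * n + C + 1) with hA
  have hK0 : 0 ≤ K := (abs_nonneg _).trans (hK 0)
  have hC0 : 0 ≤ C := (abs_nonneg _).trans (hC 0)
  have hA0 : 0 < A := by positivity
  have hpart : ∀ m i, |fderiv ℝ u m (EuclideanSpace.single i 1)| ≤ A := by
    intro m i
    have h1 := partial_le hu hK hC m i
    have h2 := partial_le (u := fun z => -u z) hu.neg (by simpa using hK)
      (by intro x; rw [lap_neg, abs_neg]; exact hC x) m i
    rw [fderiv_fun_neg] at h2
    change 2 * -(fderiv ℝ u m _) ≤ _ at h2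
    rw [abs_le]
    constructor <;> linarith
  have hfd : ∀ m, ‖fderiv ℝ u m‖ ≤ n * A + 1 := by
    intro m
    refine ContinuousLinearMap.opNorm_le_bound _ (by positivity) fun z => ?_
    have hz : z = ∑ i, z i • EuclideanSpace.single i (1 : ℝ) := by
      ext j; simp [Pi.single_apply]
    have h1 : fderiv ℝ u m z = ∑ i, z i * fderiv ℝ u m (EuclideanSpace.single i 1) := by
      conv_lhs => rw [hz]
      simp
    rw [h1]
    calc ‖∑ i, z i * fderiv ℝ u m (EuclideanSpace.single i 1)‖
        ≤ ∑ i : Fin n, ‖z‖ * A := by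
          refine norm_sum_le_of_le _ fun i _ => ?_
          rw [norm_mul]
          exact mul_le_mul (PiLp.norm_apply_le z i) (hpart m i) (norm_nonneg _) (norm_nonneg _)
      _ = n * A * ‖z‖ := by simp; ring
      _ ≤ (n * A + 1) * ‖z‖ := by nlinarith [norm_nonneg z]
  refine ⟨n * A + 1, by positivity, fun x y => ?_⟩
  have := convex_univ.norm_image_sub_le_of_norm_fderiv_le (𝕜 := ℝ) (f := u)
    (fun z _ => (hu.differentiable (by norm_num)) z) (fun z _ => hfd z)
    (Set.mem_univ y) (Set.mem_univ x)
  simpa using this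

/-! ### Quantitative strong maximum principle -/

/-- A nonnegative solution of `Δ w ≤ C w` that is at least `η` on a ball of radius `ρ` is at least
`δ η` at distance up to `R` from its centre, with `δ` independent of `w` and of the centre.
The barrier is `η (exp (-α ‖x - y‖²) - exp (-α (R + 1)²))`. -/
lemma propagate (n : ℕ) {C R ρ : ℝ} (hC : 0 ≤ C) (hR : 0 ≤ R) (hρ : 0 < ρ) :
    ∃ δ : ℝ, 0 < δ ∧ ∀ w : EuclideanSpace ℝ (Fin n) → ℝ, ContDiff ℝ 2 w → (∀ x, 0 ≤ w x) →
      (∀ x, lap n w x ≤ C * w x) → ∀ (y : EuclideanSpace ℝ (Fin n)) (η : ℝ), 0 < η →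
      (∀ z, ‖z - y‖ < ρ → η ≤ w z) → ∀ x, ‖x - y‖ ≤ R → δ * η ≤ w x := by
  have hn : (0 : ℝ) ≤ n := Nat.cast_nonneg n
  set α := 1 + (2 * n + C + 1) / (4 * ρ ^ 2) with hα
  have hα1 : 1 ≤ α := by
    have : 0 ≤ (2 * n + C + 1) / (4 * ρ ^ 2) := by positivity
    linarith
  have hα2 : 2 * n + C + 1 ≤ 4 * ρ ^ 2 * α := by
    have : 4 * ρ ^ 2 * α = 4 * ρ ^ 2 + (2 * n + C + 1) := by rw [hα]; field_simp
    nlinarith [sq_nonneg ρ]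
  set E := Real.exp (-α * (R + 1) ^ 2) with hE
  have hE0 : 0 < E := Real.exp_pos _
  refine ⟨Real.exp (-α * R ^ 2) - E, ?_, ?_⟩
  · rw [hE, sub_pos, Real.exp_lt_exp]; nlinarith
  intro w hw hw0 hlap y η hη hball x hx
  have hcw : Continuous w := hw.continuous
  let F : ℝ → ℝ := fun s => η * (Real.exp (-α * s) - E)
  obtain ⟨p, hp, hmin⟩ := (isCompact_closedBall y (R + 1)).exists_isMinOn
    ⟨y, Metric.mem_closedBall_self (by linarith)⟩
    (f := fun x => w x - F (‖x - y‖ ^ 2)) (by simp only [F]; fun_prop)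
  have hp' : ‖p - y‖ ≤ R + 1 := by simpa [dist_eq_norm] using hp
  suffices hpos : 0 ≤ w p - F (‖p - y‖ ^ 2) by
    have h1 : w p - F (‖p - y‖ ^ 2) ≤ w x - F (‖x - y‖ ^ 2) :=
      hmin (by rw [Metric.mem_closedBall, dist_eq_norm]; linarith)
    have h2 : Real.exp (-α * R ^ 2) ≤ Real.exp (-α * ‖x - y‖ ^ 2) := by
      rw [Real.exp_le_exp]
      have : ‖x - y‖ ^ 2 ≤ R ^ 2 := by gcongr
      nlinarith
    have h3 : (Real.exp (-α * R ^ 2) - E) * η ≤ F (‖x - y‖ ^ 2) := by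
      simp only [F]; nlinarith
    linarith
  by_contra hneg
  push Not at hneg
  set s := ‖p - y‖ ^ 2 with hs
  have hs0 : 0 ≤ s := by positivity
  have hexp1 : Real.exp (-α * s) ≤ 1 := by
    rw [Real.exp_le_one_iff]; nlinarith
  have hρp : ρ ≤ ‖p - y‖ := by
    by_contra h
    push Not at h
    have := hball p h
    simp only [F] at hneg
    nlinarith
  have hRp : ‖p - y‖ < R + 1 := by
    refine lt_of_le_of_ne hp' fun h => ?_
    have : F s = 0 := by simp [F, hs, h, hE]
    linarith [hw0 p]
  have hd1 : ∀ r, HasDerivAt F (-(η * α) * Real.exp (-α * r)) r := by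
    intro r
    have h1 : HasDerivAt (fun s : ℝ => -α * s) (-α) r := by
      simpa using (hasDerivAt_id r).const_mul (-α)
    refine ((h1.exp.sub_const E).const_mul η).congr_deriv ?_
    ring
  have hd2 : HasDerivAt (fun r => -(η * α) * Real.exp (-α * r))
      (η * α ^ 2 * Real.exp (-α * s)) s := by
    have h1 : HasDerivAt (fun s : ℝ => -α * s) (-α) s := by
      simpa using (hasDerivAt_id s).const_mul (-α)
    refine (h1.exp.const_mul (-(η * α))).congr_deriv ?_
    ring
  have htouch := lap_ge_of_touch hw y p (Eventually.of_forall hd1) hd2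
    (hmin.isLocalMin (Metric.closedBall_mem_nhds_of_mem (by simpa [dist_eq_norm] using hRp)))
  rw [← hs] at htouch
  have hl := hlap p
  have hwF : C * w p ≤ C * (η * Real.exp (-α * s)) := by
    refine mul_le_mul_of_nonneg_left ?_ hC
    simp only [F] at hneg
    nlinarith
  set X := η * Real.exp (-α * s) with hX
  have hXpos : 0 < X := mul_pos hη (Real.exp_pos _)
  have hfin : X * (4 * s * α ^ 2 - 2 * n * α - C) ≤ 0 := by
    have : X * (4 * s * α ^ 2 - 2 * n * α - C) =
      4 * s * (η * α ^ 2 * Real.exp (-α * s)) + 2 * n * (-(η * α) * Real.exp (-α * s)) - C * X := by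
      rw [hX]; ring
    linarith
  have hsρ : ρ ^ 2 ≤ s := by rw [hs]; gcongr
  have hq : 0 < 4 * s * α ^ 2 - 2 * n * α - C := by
    have h1 : α * (2 * n + C + 1) ≤ α * (4 * s * α) := by
      refine mul_le_mul_of_nonneg_left ?_ (by linarith)
      have : ρ ^ 2 * α ≤ s * α := by gcongr
      linarith
    nlinarith
  nlinarith [mul_pos hXpos hq]

/-! ### The reaction term -/

/-- The nonlinearity: `(P_Λ)` reads `Δ u = reaction Λ u v`, `Δ v = reaction Λ v u`. -/
def reaction (Λ a b : ℝ) : ℝ := a ^ 3 + Λ * a * b ^ 2 - a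

/-- Strict stability of the two pure states `(1, 0)` and `(0, 1)`, in the form used at an interior
minimum of `min (u (x + ξ) - u x) (v x - v (x + ξ))`. -/
lemma reaction_gap {Λ : ℝ} (hΛ : 1 < Λ) : ∃ ε κ : ℝ, 0 < ε ∧ 0 < κ ∧
    ∀ a b c d : ℝ, 0 ≤ a → 0 ≤ b → 0 ≤ c → 0 ≤ d → a < c → b - d ≤ c - a →
      ((|c| < ε ∧ |d - 1| < ε) ∨ (|a - 1| < ε ∧ |b| < ε)) →
      reaction Λ a b - reaction Λ c d ≤ -κ * (c - a) := by
  have hΛ0 : 0 < Λ := by linarith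
  set ε := (Λ - 1) / (24 * Λ ^ 2) with hε
  have hεpos : 0 < ε := by
    have : 0 < Λ - 1 := by linarith
    positivity
  have hΛε : 24 * (Λ * (Λ * ε)) = Λ - 1 := by rw [hε]; field_simp
  have hΛε1 : 24 * (Λ * ε) ≤ 1 := by
    have : Λ * (24 * (Λ * ε)) ≤ Λ * 1 := by linarith
    exact le_of_mul_le_mul_left this hΛ0
  have hΛε2 : 24 * (Λ * ε) ≤ Λ - 1 := by
    have : 0 < Λ * ε := by positivity
    nlinarith
  have hε1 : 24 * ε ≤ 1 := by nlinarith
  refine ⟨ε, min ((Λ - 1) / 2) (1 / 2), hεpos, lt_min (by linarith) (by norm_num), ?_⟩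
  intro a b c d ha hb hc hd hac hbd hcase
  set κ := min ((Λ - 1) / 2) (1 / 2) with hκ
  have hκ1 : κ ≤ (Λ - 1) / 2 := min_le_left _ _
  have hκ2 : κ ≤ 1 / 2 := min_le_right _ _
  obtain ⟨m, hm⟩ : ∃ m, m = c - a := ⟨_, rfl⟩
  have hm0 : 0 < m := by linarith
  have hca : c = a + m := by linarith
  rw [← hm] at hbd ⊢
  unfold reaction
  have hcube : 3 * a ^ 2 * m ≤ c ^ 3 - a ^ 3 := by
    rw [hca]; nlinarith [mul_nonneg ha (sq_nonneg m), pow_pos hm0 3]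
  rcases hcase with ⟨h1, h2⟩ | ⟨h1, h2⟩
  · rw [abs_lt] at h1 h2
    have hmε : m < ε := by linarith
    have haε : a < ε := by linarith
    have hb2 : b ^ 2 ≤ (d + m) ^ 2 := by
      have : b ≤ d + m := by linarith
      gcongr
    have h3 : Λ * a * b ^ 2 ≤ Λ * a * (d + m) ^ 2 := by gcongr
    have h4 : Λ * c * d ^ 2 - Λ * a * (d + m) ^ 2 = Λ * m * (d ^ 2 - a * (2 * d + m)) := by
      rw [hca]; ring
    have h5 : 1 - 6 * ε ≤ d ^ 2 - a * (2 * d + m) := by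
      have : a * (2 * d + m) ≤ ε * (2 * (1 + ε) + ε) := by
        have : 2 * d + m ≤ 2 * (1 + ε) + ε := by linarith
        gcongr
      have hd2 : 1 - 2 * ε ≤ d ^ 2 := by nlinarith only [sq_nonneg (d - 1), h2.1]
      have hε2 : 24 * (ε * ε) ≤ ε := by nlinarith only [hεpos, hε1]
      linarith
    have h6 : Λ * m * (1 - 6 * ε) ≤ Λ * m * (d ^ 2 - a * (2 * d + m)) := by gcongr
    have h7 : m * (1 + κ) ≤ m * (Λ * (1 - 6 * ε)) := by
      refine mul_le_mul_of_nonneg_left ?_ hm0.le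
      linarith
    have h8 : 0 ≤ 3 * a ^ 2 * m := by positivity
    linarith
  · rw [abs_lt] at h1 h2
    have h3 : Λ * a * b ^ 2 - Λ * c * d ^ 2 ≤ m * (1 / 4) := by
      rcases le_total b d with hbd' | hbd'
      · have : Λ * a * b ^ 2 ≤ Λ * c * d ^ 2 := by gcongr
        linarith
      · have e1 : Λ * a * d ^ 2 ≤ Λ * c * d ^ 2 := by gcongr
        have e2 : Λ * a * b ^ 2 - Λ * a * d ^ 2 = a * (b - d) * (Λ * (b + d)) := by ring
        have e3 : a * (b - d) * (Λ * (b + d)) ≤ (1 + ε) * m * (Λ * (2 * ε)) := by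
          have g1 : a ≤ 1 + ε := by linarith
          have g2 : b + d ≤ 2 * ε := by linarith
          have g3 : 0 ≤ b - d := by linarith
          gcongr
        have e4 : (1 + ε) * (Λ * (2 * ε)) ≤ 1 / 4 := by
          have : 0 < Λ * ε := by positivity
          nlinarith only [this, hΛε1, hε1, hεpos]
        have e5 := mul_le_mul_of_nonneg_left e4 hm0.le
        linarith
    have h4 : m * (3 * (1 - 2 * ε)) ≤ 3 * a ^ 2 * m := by
      have : 1 - 2 * ε ≤ a ^ 2 := by nlinarith only [sq_nonneg (a - 1), h1.1]
      nlinarith only [this, hm0]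
    have h5 : κ * m ≤ 1 / 2 * m := by gcongr
    have h6 : m * (24 * ε) ≤ m * 1 := by gcongr
    linarith

lemma reaction_sub_le {Λ K a b c d : ℝ} (hΛ : 0 ≤ Λ) (hb : 0 ≤ b)
    (hc : 0 ≤ c) (hd : 0 ≤ d) (haK : a ≤ K) (hcK : c ≤ K) (hdK : d ≤ K)
    (hca : c ≤ a) (hbd : b ≤ d) :
    reaction Λ a b - reaction Λ c d ≤ (3 * K ^ 2 + Λ * K ^ 2) * (a - c) := by
  have ha : 0 ≤ a := hc.trans hca
  unfold reaction
  have h1 : Λ * a * b ^ 2 ≤ Λ * a * d ^ 2 := by gcongr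
  have h2 : a ^ 3 + Λ * a * d ^ 2 - a - (c ^ 3 + Λ * c * d ^ 2 - c) =
      (a ^ 2 + a * c + c ^ 2 + Λ * d ^ 2 - 1) * (a - c) := by ring
  have h3 : a ^ 2 + a * c + c ^ 2 + Λ * d ^ 2 - 1 ≤ 3 * K ^ 2 + Λ * K ^ 2 := by
    have e1 : a ^ 2 ≤ K ^ 2 := by gcongr
    have e2 : c ^ 2 ≤ K ^ 2 := by gcongr
    have e3 : d ^ 2 ≤ K ^ 2 := by gcongr
    have e4 : a * c ≤ K * K := by gcongr; linarith
    have e5 : Λ * d ^ 2 ≤ Λ * K ^ 2 := by gcongr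
    nlinarith
  have h4 := mul_le_mul_of_nonneg_right h3 (sub_nonneg.2 hca)
  linarith

lemma IsSolution.lap_fst {n : ℕ} {Λ : ℝ} {u v : EuclideanSpace ℝ (Fin n) → ℝ}
    (h : IsSolution n Λ u v) (x) : lap n u x = reaction Λ (u x) (v x) := by
  have := h.2.2.1 x
  unfold reaction; linarith

lemma IsSolution.lap_snd {n : ℕ} {Λ : ℝ} {u v : EuclideanSpace ℝ (Fin n) → ℝ}
    (h : IsSolution n Λ u v) (x) : lap n v x = reaction Λ (v x) (u x) := by
  have := h.2.2.2 x
  unfold reaction; linarith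

/-- The system is invariant under `(u, v) ↦ (v (-·), u (-·))`, which also preserves `(h∞)`. -/
lemma IsSolution.swap {n : ℕ} {Λ : ℝ} {u v : EuclideanSpace ℝ (Fin n) → ℝ}
    (h : IsSolution n Λ u v) : IsSolution n Λ (fun x => v (-x)) (fun x => u (-x)) := by
  refine ⟨h.2.1.comp contDiff_neg, h.1.comp contDiff_neg, fun x => ?_, fun x => ?_⟩
  · rw [lap_comp_neg, h.lap_snd]; unfold reaction; ring
  · rw [lap_comp_neg, h.lap_fst]; unfold reaction; ring

lemma Hinf.swap {N : ℕ} {u v : EuclideanSpace ℝ (Fin (N + 1)) → ℝ} (h : Hinf N u v) :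
    Hinf N (fun x => v (-x)) (fun x => u (-x)) := by
  constructor
  · intro ε hε
    obtain ⟨M, hM⟩ := h.2 ε hε
    refine ⟨-M, fun x hx => (hM (-x) ?_).symm⟩
    rw [PiLp.neg_apply]; linarith
  · intro ε hε
    obtain ⟨M, hM⟩ := h.1 ε hε
    refine ⟨-M, fun x hx => (hM (-x) ?_).symm⟩
    rw [PiLp.neg_apply]; linarith

lemma Hinf.exists_bound {N : ℕ} {u v : EuclideanSpace ℝ (Fin (N + 1)) → ℝ} (h : Hinf N u v)
    {ε : ℝ} (hε : 0 < ε) : ∃ M : ℝ, 0 ≤ M ∧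
      (∀ x : EuclideanSpace ℝ (Fin (N + 1)), M ≤ x (Fin.last N) → |u x - 1| < ε ∧ |v x| < ε) ∧
      (∀ x : EuclideanSpace ℝ (Fin (N + 1)), x (Fin.last N) ≤ -M → |u x| < ε ∧ |v x - 1| < ε) := by
  obtain ⟨M1, h1⟩ := h.1 ε hε
  obtain ⟨M2, h2⟩ := h.2 ε hε
  refine ⟨|M1| + |M2|, by positivity, fun x hx => h1 x ?_, fun x hx => h2 x ?_⟩
  · linarith [le_abs_self M1, abs_nonneg M2]
  · linarith [neg_abs_le M2, abs_nonneg M1]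

lemma IsSolution.fst_le {n : ℕ} {Λ : ℝ} {u v : EuclideanSpace ℝ (Fin n) → ℝ}
    (h : IsSolution n Λ u v) (hΛ : 0 ≤ Λ) (hu : ∀ x, 0 ≤ u x) (x) : u x ≤ 2 * n + 10 := by
  refine keller_osserman h.1 (fun x => ?_) x
  rw [h.lap_fst]; unfold reaction
  have : 0 ≤ Λ * u x * v x ^ 2 := mul_nonneg (mul_nonneg hΛ (hu x)) (sq_nonneg _)
  linarith

lemma IsSolution.snd_le {n : ℕ} {Λ : ℝ} {u v : EuclideanSpace ℝ (Fin n) → ℝ}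
    (h : IsSolution n Λ u v) (hΛ : 0 ≤ Λ) (hv : ∀ x, 0 ≤ v x) (x) : v x ≤ 2 * n + 10 := by
  simpa using h.swap.fst_le hΛ (fun x => hv (-x)) (-x)

lemma IsSolution.fst_lipschitz {n : ℕ} {Λ : ℝ} {u v : EuclideanSpace ℝ (Fin n) → ℝ}
    (h : IsSolution n Λ u v) (hΛ : 0 ≤ Λ) (hu : ∀ x, 0 ≤ u x) (hv : ∀ x, 0 ≤ v x) :
    ∃ L : ℝ, 0 < L ∧ ∀ x y, |u x - u y| ≤ L * ‖x - y‖ := by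
  set K : ℝ := 2 * n + 10 with hK
  have huK := h.fst_le hΛ hu
  have hvK := h.snd_le hΛ hv
  refine exists_lipschitz h.1 (K := K) (C := K ^ 3 + Λ * K * K ^ 2 + K) (fun x => ?_) fun x => ?_
  · rw [abs_of_nonneg (hu x)]; exact huK x
  · rw [h.lap_fst]; unfold reaction
    have h0 := hu x
    have h0' := hv x
    have h1 : u x ^ 3 ≤ K ^ 3 := by gcongr; exact huK x
    have h2 : Λ * u x * v x ^ 2 ≤ Λ * K * K ^ 2 := by
      have := huK x
      have := hvK x
      have : 0 ≤ K := by positivity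
      gcongr
    have h3 : 0 ≤ u x ^ 3 := by positivity
    have h4 : 0 ≤ Λ * u x * v x ^ 2 := by positivity
    have h5 := huK x
    rw [abs_le]; constructor <;> linarith

/-! ### Sliding -/

/-- `(u, v)` moves in the expected sense under the translation by `ξ`: `u` does not decrease and
`v` does not increase. -/
def Slides {n : ℕ} (u v : EuclideanSpace ℝ (Fin n) → ℝ) (ξ : EuclideanSpace ℝ (Fin n)) : Prop :=
  ∀ x, u x ≤ u (x + ξ) ∧ v (x + ξ) ≤ v x

lemma Slides.swap {n : ℕ} {u v : EuclideanSpace ℝ (Fin n) → ℝ} {ξ : EuclideanSpace ℝ (Fin n)}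
    (h : Slides u v ξ) : Slides (fun x => v (-x)) (fun x => u (-x)) ξ := by
  intro x
  have h1 := h (-(x + ξ))
  have e : -(x + ξ) + ξ = -x := by abel
  rw [e] at h1
  exact ⟨h1.2, h1.1⟩

/-- Touching by `-e ‖x‖²` from below. -/
lemma lap_ge_of_penalized {n : ℕ} {w : EuclideanSpace ℝ (Fin n) → ℝ} (hw : ContDiff ℝ 2 w)
    {e : ℝ} {p : EuclideanSpace ℝ (Fin n)}
    (hmin : ∀ x, w p + e * ‖p‖ ^ 2 ≤ w x + e * ‖x‖ ^ 2) : -(2 * n * e) ≤ lap n w p := by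
  have := lap_ge_of_touch hw 0 p (F := fun s => -(e * s)) (F' := fun _ => -e) (F2 := 0)
    (Eventually.of_forall fun s => by
      exact ((hasDerivAt_id s).const_mul e).neg.congr_deriv (by simp)) (hasDerivAt_const _ _)
    (Eventually.of_forall fun x => by
      have := hmin x
      simp only [sub_zero]
      linarith)
  linarith

/-- If the sliding inequalities can only fail at points where one of the two states involved is
close to a stable pure state, then they do not fail. -/
lemma slides_of_stable {n : ℕ} {Λ ε κ : ℝ} {u v : EuclideanSpace ℝ (Fin n) → ℝ}
    (hsol : IsSolution n Λ u v) (hΛ : 0 ≤ Λ) (hu : ∀ x, 0 ≤ u x) (hv : ∀ x, 0 ≤ v x)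
    (hκ : 0 < κ)
    (hgap : ∀ a b c d : ℝ, 0 ≤ a → 0 ≤ b → 0 ≤ c → 0 ≤ d → a < c → b - d ≤ c - a →
      ((|c| < ε ∧ |d - 1| < ε) ∨ (|a - 1| < ε ∧ |b| < ε)) →
      reaction Λ a b - reaction Λ c d ≤ -κ * (c - a))
    (ξ : EuclideanSpace ℝ (Fin n))
    (hbad : ∀ x, (u (x + ξ) < u x ∨ v x < v (x + ξ)) →
      ((|u x| < ε ∧ |v x - 1| < ε) ∨ (|u (x + ξ) - 1| < ε ∧ |v (x + ξ)| < ε))) :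
    Slides u v ξ := by
  set K : ℝ := 2 * n + 10 with hK
  have huK := hsol.fst_le hΛ hu
  have hvK := hsol.snd_le hΛ hv
  have hcu : Continuous u := hsol.1.continuous
  have hcv : Continuous v := hsol.2.1.continuous
  have htr : ContDiff ℝ 2 fun x : EuclideanSpace ℝ (Fin n) => x + ξ := by fun_prop
  let w : EuclideanSpace ℝ (Fin n) → ℝ := fun x => u (x + ξ) - u x
  let z : EuclideanSpace ℝ (Fin n) → ℝ := fun x => v x - v (x + ξ)
  have hut : ContDiff ℝ 2 fun x => u (x + ξ) := hsol.1.comp htr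
  have hvt : ContDiff ℝ 2 fun x => v (x + ξ) := hsol.2.1.comp htr
  have hw : ContDiff ℝ 2 w := hut.sub hsol.1
  have hz : ContDiff ℝ 2 z := hsol.2.1.sub hvt
  have hlw : ∀ x, lap n w x =
      reaction Λ (u (x + ξ)) (v (x + ξ)) - reaction Λ (u x) (v x) := by
    intro x
    rw [lap_sub hut hsol.1, lap_translate, hsol.lap_fst, hsol.lap_fst]
  have hlz : ∀ x, lap n z x =
      reaction Λ (v x) (u x) - reaction Λ (v (x + ξ)) (u (x + ξ)) := by
    intro x
    rw [lap_sub hsol.2.1 hvt, lap_translate, hsol.lap_snd, hsol.lap_snd]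
  suffices hmain : ∀ x, 0 ≤ min (w x) (z x) by
    intro x
    have h1 : 0 ≤ w x := (hmain x).trans (min_le_left _ _)
    have h2 : 0 ≤ z x := (hmain x).trans (min_le_right _ _)
    exact ⟨sub_nonneg.1 h1, sub_nonneg.1 h2⟩
  by_contra hcon
  push Not at hcon
  obtain ⟨x0, hx0⟩ := hcon
  set m0 := -(min (w x0) (z x0)) / 2 with hm0
  have hm0pos : 0 < m0 := by linarith
  -- the penalization weight, small with respect to `m0`, `κ m0`, `‖x0‖` and the dimension
  set e := m0 * min 1 κ / (‖x0‖ ^ 2 + 2 * n + 1) with he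
  have hden : 0 < ‖x0‖ ^ 2 + 2 * n + 1 := by positivity
  have hκ' : 0 < min 1 κ := lt_min one_pos hκ
  have hepos : 0 < e := by positivity
  have hee : e * ‖x0‖ ^ 2 + 2 * n * e + e = m0 * min 1 κ := by
    rw [he]; field_simp
  have hne : 0 ≤ 2 * n * e := by positivity
  have hxe : 0 ≤ e * ‖x0‖ ^ 2 := by positivity
  have he1 : e * ‖x0‖ ^ 2 ≤ m0 := by
    have : m0 * min 1 κ ≤ m0 * 1 := by gcongr; exact min_le_left _ _
    linarith
  have he2 : 2 * n * e < κ * m0 := by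
    have : m0 * min 1 κ ≤ m0 * κ := by gcongr; exact min_le_right _ _
    linarith
  have hcont : Continuous fun x => min (w x) (z x) + e * ‖x‖ ^ 2 := by
    have := hw.continuous
    have := hz.continuous
    fun_prop
  have hlim : Tendsto (fun x => min (w x) (z x) + e * ‖x‖ ^ 2)
      (cocompact (EuclideanSpace ℝ (Fin n))) atTop := by
    have h1 : Tendsto (fun x : EuclideanSpace ℝ (Fin n) => -K + e * ‖x‖ ^ 2)
        (cocompact (EuclideanSpace ℝ (Fin n))) atTop :=
      tendsto_atTop_add_const_left _ _
        (((tendsto_pow_atTop two_ne_zero).comp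
          (tendsto_norm_cocompact_atTop (E := EuclideanSpace ℝ (Fin n)))).const_mul_atTop hepos)
    refine tendsto_atTop_mono (fun x => ?_) h1
    have : -K ≤ min (w x) (z x) := by
      refine le_min ?_ ?_
      · simp only [w]; linarith [hu (x + ξ), huK x]
      · simp only [z]; linarith [hv x, hvK (x + ξ)]
    linarith
  obtain ⟨p, hp⟩ := hcont.exists_forall_le hlim
  have hpval : min (w p) (z p) ≤ -m0 := by
    have := hp x0
    have : 0 ≤ e * ‖p‖ ^ 2 := by positivity
    linarith
  rcases le_total (w p) (z p) with hwz | hwz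
  · rw [min_eq_left hwz] at hpval
    have hpw : ∀ x, w p + e * ‖p‖ ^ 2 ≤ w x + e * ‖x‖ ^ 2 := by
      intro x
      have := hp x
      rw [min_eq_left hwz] at this
      linarith [min_le_left (w x) (z x)]
    have h1 := lap_ge_of_penalized hw hpw
    have hlt : u (p + ξ) < u p := by
      have : w p < 0 := by linarith
      exact sub_neg.1 this
    have h2 := hgap (u (p + ξ)) (v (p + ξ)) (u p) (v p) (hu _) (hv _) (hu _) (hv _) hlt
      (by simp only [w, z] at hwz; linarith) (hbad p (Or.inl hlt))
    rw [hlw] at h1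
    have h3 : κ * m0 ≤ κ * (u p - u (p + ξ)) := by
      gcongr; simp only [w] at hpval; linarith
    linarith
  · rw [min_eq_right hwz] at hpval
    have hpw : ∀ x, z p + e * ‖p‖ ^ 2 ≤ z x + e * ‖x‖ ^ 2 := by
      intro x
      have := hp x
      rw [min_eq_right hwz] at this
      linarith [min_le_right (w x) (z x)]
    have h1 := lap_ge_of_penalized hz hpw
    have hlt : v p < v (p + ξ) := by
      have : z p < 0 := by linarith
      exact sub_neg.1 this
    have h2 := hgap (v p) (u p) (v (p + ξ)) (u (p + ξ)) (hv _) (hu _) (hv _) (hu _) hlt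
      (by simp only [w, z] at hwz; linarith)
      ((hbad p (Or.inr hlt)).elim (fun h => Or.inr h.symm) fun h => Or.inl h.symm)
    rw [hlz] at h1
    have h3 : κ * m0 ≤ κ * (v (p + ξ) - v p) := by
      gcongr; simp only [z] at hpval; linarith
    linarith

lemma Slides.supersolution {n : ℕ} {Λ : ℝ} {u v : EuclideanSpace ℝ (Fin n) → ℝ}
    (hsol : IsSolution n Λ u v) (hΛ : 0 ≤ Λ) (hu : ∀ x, 0 ≤ u x) (hv : ∀ x, 0 ≤ v x)
    {ξ : EuclideanSpace ℝ (Fin n)} (hS : Slides u v ξ) :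
    ContDiff ℝ 2 (fun x => u (x + ξ) - u x) ∧ (∀ x, 0 ≤ u (x + ξ) - u x) ∧
    ∀ x, lap n (fun x => u (x + ξ) - u x) x ≤
      (3 * (2 * n + 10 : ℝ) ^ 2 + Λ * (2 * n + 10 : ℝ) ^ 2) * (u (x + ξ) - u x) := by
  have htr : ContDiff ℝ 2 fun x : EuclideanSpace ℝ (Fin n) => x + ξ := by fun_prop
  have hut : ContDiff ℝ 2 fun x => u (x + ξ) := hsol.1.comp htr
  refine ⟨hut.sub hsol.1, fun x => sub_nonneg.2 (hS x).1, fun x => ?_⟩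
  rw [lap_sub hut hsol.1, lap_translate, hsol.lap_fst, hsol.lap_fst]
  exact reaction_sub_le hΛ (hv _) (hu _) (hv _) (hsol.fst_le hΛ hu _) (hsol.fst_le hΛ hu _)
    (hsol.snd_le hΛ hv _) (hS x).1 (hS x).2

/-- If `(u, v)` slides under `ξ` with `ξ_N > 0`, then `u (x + ξ) - u x` is bounded below by a
positive constant on every slab `|x_N| ≤ M`. Along the points `x + j ξ`, the function `u` climbs
from below `1/4` to above `3/4` in a number of steps independent of `x`, so one of the increments
is not small; `propagate` transports it back to `x`. -/
lemma Slides.slab_gap {N : ℕ} {Λ : ℝ} {u v : EuclideanSpace ℝ (Fin (N + 1)) → ℝ}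
    (hsol : IsSolution (N + 1) Λ u v) (hΛ : 0 ≤ Λ) (hu : ∀ x, 0 ≤ u x) (hv : ∀ x, 0 ≤ v x)
    (hinf : Hinf N u v) {ξ : EuclideanSpace ℝ (Fin (N + 1))} (hξ : 0 < ξ (Fin.last N))
    (hS : Slides u v ξ) (M : ℝ) :
    ∃ δ : ℝ, 0 < δ ∧ ∀ x : EuclideanSpace ℝ (Fin (N + 1)), |x (Fin.last N)| ≤ M →
      u x + δ ≤ u (x + ξ) := by
  obtain ⟨L, hL, hLip⟩ := hsol.fst_lipschitz hΛ hu hv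
  obtain ⟨M1, hM10, hM1, hM1'⟩ := hinf.exists_bound (ε := 1 / 4) (by norm_num)
  obtain ⟨hw, hw0, hwl⟩ := hS.supersolution hsol hΛ hu hv
  obtain ⟨J, hJ⟩ := exists_nat_gt ((|M| + M1) / ξ (Fin.last N))
  rw [div_lt_iff₀ hξ] at hJ
  have hJ0 : 0 < J := by
    rcases Nat.eq_zero_or_pos J with h | h
    · subst h
      have := abs_nonneg M
      simp at hJ
      linarith
    · exact h
  have hJr : (0 : ℝ) < J := by exact_mod_cast hJ0
  set η : ℝ := 1 / (8 * J) with hη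
  have hηpos : 0 < η := by positivity
  set ρ : ℝ := η / (2 * L) with hρ
  have hρpos : 0 < ρ := by positivity
  set C : ℝ := 3 * (2 * (N + 1 : ℕ) + 10 : ℝ) ^ 2 + Λ * (2 * (N + 1 : ℕ) + 10 : ℝ) ^ 2 with hC
  obtain ⟨δ, hδ, hprop⟩ := propagate (N + 1) (C := C) (R := J * ‖ξ‖) (ρ := ρ)
    (by positivity) (by positivity) hρpos
  refine ⟨δ * η, by positivity, fun x hx => ?_⟩
  have hxM := abs_le.1 (hx.trans (le_abs_self M))
  -- the increments along `x + (k - J) ξ`, `0 ≤ k < 2 J`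
  let pt : ℕ → EuclideanSpace ℝ (Fin (N + 1)) := fun k => x + ((k : ℝ) - J) • ξ
  have hpt : ∀ k, pt (k + 1) = pt k + ξ := by
    intro k; simp only [pt]; push_cast; module
  have htel := Finset.sum_range_sub (fun k => u (pt k)) (2 * J)
  have hhi : 3 / 4 < u (pt (2 * J)) := by
    have h1 := (hM1 (pt (2 * J)) (by
      simp only [pt, PiLp.add_apply, PiLp.smul_apply, smul_eq_mul]; push_cast; nlinarith)).1
    rw [abs_lt] at h1; linarith
  have hlo : u (pt 0) < 1 / 4 := by
    have h1 := (hM1' (pt 0) (by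
      simp only [pt, PiLp.add_apply, PiLp.smul_apply, smul_eq_mul]; push_cast; nlinarith)).1
    rw [abs_lt] at h1; linarith
  obtain ⟨k, hk, hkη⟩ : ∃ k ∈ Finset.range (2 * J), 2 * η ≤ u (pt (k + 1)) - u (pt k) := by
    by_contra hcon
    push Not at hcon
    have h1 : ∑ k ∈ Finset.range (2 * J), (u (pt (k + 1)) - u (pt k)) ≤
        ∑ k ∈ Finset.range (2 * J), 2 * η :=
      Finset.sum_le_sum fun k hk => (hcon k hk).le
    rw [htel] at h1
    simp only [Finset.sum_const, Finset.card_range, nsmul_eq_mul] at h1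
    have h2 : ((2 * J : ℕ) : ℝ) * (2 * η) = 1 / 2 := by
      rw [hη]; push_cast; field_simp; norm_num
    linarith
  have hkJ : (k : ℝ) < 2 * J := by exact_mod_cast Finset.mem_range.1 hk
  have hfin := hprop _ hw hw0 hwl (pt k) η hηpos (fun y hy => by
    have h1 := abs_le.1 (hLip y (pt k))
    have h2 := abs_le.1 (hLip (y + ξ) (pt k + ξ))
    rw [add_sub_add_right_eq_sub] at h2
    rw [hpt] at hkη
    have h3 : L * ‖y - pt k‖ ≤ η / 2 := by
      have : L * ‖y - pt k‖ ≤ L * ρ := by gcongr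
      have e : L * ρ = η / 2 := by rw [hρ]; field_simp
      linarith
    linarith) x (by
    have e : x - pt k = ((J : ℝ) - k) • ξ := by simp only [pt]; module
    rw [e, norm_smul, Real.norm_eq_abs]
    gcongr
    rw [abs_le]
    constructor
    · linarith
    · linarith [(Nat.cast_nonneg k : (0 : ℝ) ≤ k)])
  linarith

/-- Sliding in every direction that points into the upper half space. -/
lemma slides_of_pos {N : ℕ} {Λ : ℝ} (hΛ : 1 < Λ) {u v : EuclideanSpace ℝ (Fin (N + 1)) → ℝ}
    (hsol : IsSolution (N + 1) Λ u v) (hu : ∀ x, 0 ≤ u x) (hv : ∀ x, 0 ≤ v x)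
    (hinf : Hinf N u v) {ξ : EuclideanSpace ℝ (Fin (N + 1))} (hξ : 0 < ξ (Fin.last N)) :
    Slides u v ξ := by
  have hΛ0 : 0 ≤ Λ := by linarith
  obtain ⟨ε, κ, hε, hκ, hgap⟩ := reaction_gap hΛ
  obtain ⟨M, hM0, hM, hM'⟩ := hinf.exists_bound hε
  obtain ⟨L1, hL1, hLip1⟩ := hsol.fst_lipschitz hΛ0 hu hv
  obtain ⟨L2, hL2, hLip2⟩ := hsol.swap.fst_lipschitz hΛ0 (fun x => hv _) fun x => hu _
  have hLip2' : ∀ x y, |v x - v y| ≤ L2 * ‖x - y‖ := by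
    intro x y
    have := hLip2 (-x) (-y)
    have e1 : -x - -y = -(x - y) := by abel
    rwa [neg_neg, neg_neg, e1, norm_neg] at this
  have hcu : Continuous u := hsol.1.continuous
  have hcv : Continuous v := hsol.2.1.continuous
  have hstable := slides_of_stable hsol hΛ0 hu hv hκ hgap
  -- outside the slab `|x_N| ≤ M` the stability hypothesis holds automatically
  have hout : ∀ (τ : ℝ), 0 ≤ τ → ∀ x : EuclideanSpace ℝ (Fin (N + 1)), M < |x (Fin.last N)| →
      ((|u x| < ε ∧ |v x - 1| < ε) ∨ (|u (x + τ • ξ) - 1| < ε ∧ |v (x + τ • ξ)| < ε)) := by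
    intro τ hτ x hx
    rcases lt_abs.1 hx with h | h
    · right
      refine hM _ ?_
      simp only [PiLp.add_apply, PiLp.smul_apply, smul_eq_mul]
      nlinarith
    · left
      exact hM' _ (by linarith)
  set T := 1 + 2 * M / ξ (Fin.last N) with hT
  have hT1 : 1 ≤ T := by
    have : 0 ≤ 2 * M / ξ (Fin.last N) := by positivity
    linarith
  have hTξ : 2 * M ≤ T * ξ (Fin.last N) := by
    have : T * ξ (Fin.last N) = ξ (Fin.last N) + 2 * M := by rw [hT]; field_simp
    linarith
  have hstart : Slides u v (T • ξ) := by
    refine hstable _ fun x _ => ?_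
    rcases le_total (x (Fin.last N)) (-M) with h | h
    · exact Or.inl (hM' _ h)
    · right
      refine hM _ ?_
      simp only [PiLp.add_apply, PiLp.smul_apply, smul_eq_mul]
      linarith
  let s : Set ℝ := {σ | Slides u v ((T - σ) • ξ)}
  have hclosed : IsClosed s := by
    have : s = ⋂ x, ({σ : ℝ | u x ≤ u (x + (T - σ) • ξ)} ∩ {σ : ℝ | v (x + (T - σ) • ξ) ≤ v x}) := by
      ext σ; simp [s, Slides]
    rw [this]
    exact isClosed_iInter fun x => (isClosed_le (by fun_prop) (by fun_prop)).inter
      (isClosed_le (by fun_prop) (by fun_prop))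
  have hmem : T - 1 ∈ s := by
    refine (hclosed.inter isClosed_Icc).mem_of_ge_of_forall_exists_gt (a := 0) ?_ (by linarith) ?_
    · change Slides u v ((T - 0) • ξ)
      rwa [sub_zero]
    · rintro σ ⟨hσ, hσ0, hσ1⟩
      have hτ : 0 < T - σ := by linarith
      have hξτ : 0 < ((T - σ) • ξ) (Fin.last N) := by
        simp only [PiLp.smul_apply, smul_eq_mul]; positivity
      obtain ⟨δ1, hδ1, hg1⟩ := Slides.slab_gap hsol hΛ0 hu hv hinf hξτ hσ M
      obtain ⟨δ2, hδ2, hg2⟩ := Slides.slab_gap hsol.swap hΛ0 (fun x => hv _) (fun x => hu _)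
        hinf.swap hξτ hσ.swap (M + |((T - σ) • ξ) (Fin.last N)|)
      have hg2' : ∀ x : EuclideanSpace ℝ (Fin (N + 1)), |x (Fin.last N)| ≤ M →
          v (x + (T - σ) • ξ) + δ2 ≤ v x := by
        intro x hx
        have h := hg2 (-(x + (T - σ) • ξ)) (by
          rw [PiLp.neg_apply, abs_neg, PiLp.add_apply]
          exact (abs_add_le _ _).trans (by linarith))
        have e : -(-(x + (T - σ) • ξ) + (T - σ) • ξ) = x := by abel
        rwa [neg_neg, e] at h
      -- the step length, short enough for the Lipschitz bounds not to consume the gaps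
      set r := min (δ1 / (L1 * ‖ξ‖ + 1)) (δ2 / (L2 * ‖ξ‖ + 1)) with hr
      have hr0 : 0 < r := lt_min (by positivity) (by positivity)
      have hr1 : r * (L1 * ‖ξ‖) ≤ δ1 := by
        have h1 : r * (L1 * ‖ξ‖ + 1) ≤ δ1 := (le_div_iff₀ (by positivity)).1 (min_le_left _ _)
        nlinarith
      have hr2 : r * (L2 * ‖ξ‖) ≤ δ2 := by
        have h1 : r * (L2 * ‖ξ‖ + 1) ≤ δ2 := (le_div_iff₀ (by positivity)).1 (min_le_right _ _)
        nlinarith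
      set σ' := min (T - 1) (σ + r) with hσ'
      have hσσ' : σ < σ' := lt_min hσ1 (by linarith)
      have hσ'r : σ' - σ ≤ r := by linarith [min_le_right (T - 1) (σ + r)]
      have hσ'1 : σ' ≤ T - 1 := min_le_left _ _
      refine ⟨σ', ?_, hσσ', hσ'1⟩
      refine hstable _ fun x hx => ?_
      rcases lt_or_ge M |x (Fin.last N)| with h | h
      · exact hout _ (by linarith) x h
      · exfalso
        have hdist : ‖(x + (T - σ') • ξ) - (x + (T - σ) • ξ)‖ ≤ r * ‖ξ‖ := by
          have e : (x + (T - σ') • ξ) - (x + (T - σ) • ξ) = (σ - σ') • ξ := by module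
          rw [e, norm_smul, Real.norm_eq_abs, abs_of_neg (by linarith)]
          gcongr
          linarith
        have h1 := abs_le.1 (hLip1 (x + (T - σ') • ξ) (x + (T - σ) • ξ))
        have h2 := abs_le.1 (hLip2' (x + (T - σ') • ξ) (x + (T - σ) • ξ))
        have h3 := mul_le_mul_of_nonneg_left hdist hL1.le
        have h4 := mul_le_mul_of_nonneg_left hdist hL2.le
        have h5 := hg1 x h
        have h6 := hg2' x h
        rcases hx with hx | hx
        · linarith
        · linarith
  have hfin : Slides u v ((T - (T - 1)) • ξ) := hmem
  simpa using hfin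

/-! ### Strict monotonicity and symmetry -/

/-- Strict positivity of `∂_N u`. The difference quotients of `u` in the direction `e_N` are
uniformly positive near a point where `∂_N u > 0`, and `propagate` is linear in the lower bound, so
they are uniformly positive at every point. -/
lemma partial_pos {N : ℕ} {Λ : ℝ} (hΛ : 1 < Λ) {u v : EuclideanSpace ℝ (Fin (N + 1)) → ℝ}
    (hsol : IsSolution (N + 1) Λ u v) (hu : ∀ x, 0 ≤ u x) (hv : ∀ x, 0 ≤ v x)
    (hinf : Hinf N u v) (x : EuclideanSpace ℝ (Fin (N + 1))) :
    0 < fderiv ℝ u x (EuclideanSpace.single (Fin.last N) 1) := by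
  have hΛ0 : 0 ≤ Λ := by linarith
  set e : EuclideanSpace ℝ (Fin (N + 1)) := EuclideanSpace.single (Fin.last N) 1 with he
  have hel : e (Fin.last N) = 1 := by simp [he]
  have hen : ‖e‖ = 1 := by simp [he]
  have hmvt : ∀ (z : EuclideanSpace ℝ (Fin (N + 1))) (t : ℝ), 0 < t →
      ∃ c ∈ Set.Ioo 0 t, u (z + t • e) - u z = t * fderiv ℝ u (z + c • e) e := by
    intro z t ht
    obtain ⟨c, hc, h⟩ := exists_hasDerivAt_eq_slope (fun t : ℝ => u (z + t • e))
      (fun t => fderiv ℝ u (z + t • e) e) ht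
      (fun t _ => (hasDerivAt_line hsol.1 z e t).continuousAt.continuousWithinAt)
      (fun t _ => hasDerivAt_line hsol.1 z e t)
    refine ⟨c, hc, ?_⟩
    simp only [zero_smul, add_zero, sub_zero] at h
    rw [h]; field_simp
  obtain ⟨y, hy⟩ : ∃ y, 0 < fderiv ℝ u y e := by
    obtain ⟨M, hM0, hM, hM'⟩ := hinf.exists_bound (ε := 1 / 4) (by norm_num)
    obtain ⟨c, -, hc⟩ := hmvt ((-M) • e) (2 * M + 1) (by linarith)
    refine ⟨(-M) • e + c • e, ?_⟩
    have h1 := (hM ((-M) • e + (2 * M + 1) • e) (by simp [hel]; linarith)).1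
    have h2 := (hM' ((-M) • e) (by simp [hel])).1
    rw [abs_lt] at h1 h2
    have h3 : 0 < (2 * M + 1) * fderiv ℝ u ((-M) • e + c • e) e := by linarith
    exact pos_of_mul_pos_right h3 (by linarith)
  set η := fderiv ℝ u y e / 2 with hη
  have hη0 : 0 < η := by positivity
  have hcont : Continuous fun z => fderiv ℝ u z e := by
    have := hsol.1.continuous_fderiv (by norm_num)
    fun_prop
  obtain ⟨ρ, hρ, hball⟩ := Metric.eventually_nhds_iff.1
    (hcont.continuousAt.eventually (lt_mem_nhds (show η < fderiv ℝ u y e by linarith)))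
  set C : ℝ := 3 * (2 * (N + 1 : ℕ) + 10 : ℝ) ^ 2 + Λ * (2 * (N + 1 : ℕ) + 10 : ℝ) ^ 2 with hC
  obtain ⟨δ, hδ, hprop⟩ := propagate (N + 1) (C := C) (R := ‖x - y‖) (ρ := ρ / 2)
    (by positivity) (norm_nonneg _) (by positivity)
  have hquot : ∀ t : ℝ, t ∈ Set.Ioo 0 (ρ / 2) → δ * η ≤ t⁻¹ * (u (x + t • e) - u x) := by
    intro t ht
    have hS : Slides u v (t • e) :=
      slides_of_pos hΛ hsol hu hv hinf (by simp [hel, ht.1])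
    obtain ⟨hw, hw0, hwl⟩ := hS.supersolution hsol hΛ0 hu hv
    have h := hprop _ hw hw0 hwl y (t * η) (mul_pos ht.1 hη0) (fun z hz => by
      obtain ⟨c, hc, h⟩ := hmvt z t ht.1
      rw [h]
      have h1 : η < fderiv ℝ u (z + c • e) e := by
        refine hball ?_
        rw [dist_eq_norm]
        have e1 : z + c • e - y = (z - y) + c • e := by abel
        rw [e1]
        refine (norm_add_le _ _).trans_lt ?_
        rw [norm_smul, hen, Real.norm_eq_abs, abs_of_pos hc.1]
        linarith [hc.2, ht.2]
      exact mul_le_mul_of_nonneg_left h1.le ht.1.le) x le_rfl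
    rw [le_inv_mul_iff₀ ht.1]
    linarith
  have hlim := (hasDerivAt_line hsol.1 x e 0).tendsto_slope_zero_right
  simp only [zero_smul, add_zero, zero_add, smul_eq_mul] at hlim
  have : δ * η ≤ fderiv ℝ u x e := by
    refine ge_of_tendsto hlim ?_
    filter_upwards [Ioo_mem_nhdsGT (show (0 : ℝ) < ρ / 2 by positivity)] with t ht
    exact hquot t ht
  exact lt_of_lt_of_le (mul_pos hδ hη0) this

lemma le_of_last_eq {N : ℕ} {Λ : ℝ} (hΛ : 1 < Λ) {u v : EuclideanSpace ℝ (Fin (N + 1)) → ℝ}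
    (hsol : IsSolution (N + 1) Λ u v) (hu : ∀ x, 0 ≤ u x) (hv : ∀ x, 0 ≤ v x)
    (hinf : Hinf N u v) {x y : EuclideanSpace ℝ (Fin (N + 1))}
    (hxy : x (Fin.last N) = y (Fin.last N)) : u x ≤ u y ∧ v y ≤ v x := by
  set e : EuclideanSpace ℝ (Fin (N + 1)) := EuclideanSpace.single (Fin.last N) 1 with he
  have hel : e (Fin.last N) = 1 := by simp [he]
  have hS : ∀ t : ℝ, 0 < t → u x ≤ u (y + t • e) ∧ v (y + t • e) ≤ v x := by
    intro t ht
    have h : Slides u v (y - x + t • e) := slides_of_pos hΛ hsol hu hv hinf (by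
      simp [hel, hxy, ht])
    have e1 : x + (y - x + t • e) = y + t • e := by abel
    have := h x
    rwa [e1] at this
  have hlim : ∀ f : EuclideanSpace ℝ (Fin (N + 1)) → ℝ, Continuous f →
      Tendsto (fun t : ℝ => f (y + t • e)) (nhdsWithin 0 (Set.Ioi 0)) (nhds (f y)) := by
    intro f hf
    have : Continuous fun t : ℝ => f (y + t • e) := by fun_prop
    simpa using (this.tendsto 0).mono_left nhdsWithin_le_nhds
  constructor
  · refine ge_of_tendsto (hlim u hsol.1.continuous) ?_
    filter_upwards [self_mem_nhdsWithin] with t ht using (hS t ht).1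
  · refine le_of_tendsto (hlim v hsol.2.1.continuous) ?_
    filter_upwards [self_mem_nhdsWithin] with t ht using (hS t ht).2

/-- Theorem 1.1, Gibbons' conjecture for the Gross–Pitaevskii system:
monotonicity and one-dimensional symmetry under the uniform limit condition. -/
theorem stmt_0 (N : ℕ) (Λ : ℝ) (hΛ : 1 < Λ)
    (u v : EuclideanSpace ℝ (Fin (N + 1)) → ℝ)
    (hsol : IsSolution (N + 1) Λ u v)
    (hu : ∀ x, 0 ≤ u x) (hv : ∀ x, 0 ≤ v x)
    (hinf : Hinf N u v) :
    (∀ x y : EuclideanSpace ℝ (Fin (N + 1)),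
      x (Fin.last N) = y (Fin.last N) → u x = u y ∧ v x = v y) ∧
    (∀ x : EuclideanSpace ℝ (Fin (N + 1)),
      0 < fderiv ℝ u x (EuclideanSpace.single (Fin.last N) 1) ∧
      fderiv ℝ v x (EuclideanSpace.single (Fin.last N) 1) < 0) := by
  refine ⟨fun x y hxy => ?_, fun x => ⟨partial_pos hΛ hsol hu hv hinf x, ?_⟩⟩
  · have h1 := le_of_last_eq hΛ hsol hu hv hinf hxy
    have h2 := le_of_last_eq hΛ hsol hu hv hinf hxy.symm
    exact ⟨le_antisymm h1.1 h2.1, le_antisymm h2.2 h1.2⟩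
  · have h := partial_pos hΛ hsol.swap (fun x => hv _) (fun x => hu _) hinf.swap (-x)
    rw [fderiv_comp_neg_apply, neg_neg] at h
    linarith
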